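/- arXiv:2603.07768 — 8 statements merged into one kernel-verified Lean document; each statement's English description precedes it below -/
import Mathlib

section
/- Let ν > 0, Δt > 0, λ > 0 and σ := √(λ² + 1/ν). Then σ² + ν⁻¹·sinh²(σΔt) < (σ·cosh(σΔt) + λ·sinh(σΔt))². Equivalently, with C₁ := −ν⁻¹·sinh(σΔt)/(σ·cosh(σΔt) + λ·sinh(σΔt)) and C₂ := σ/(σ·cosh(σΔt) + λ·sinh(σΔt)), one has ν·C₁² + C₂² < 1. -/
noncomputable section

/-- σ := √(λ² + 1/ν). -/
def sig (ν lam : ℝ) : ℝ := Real.sqrt (lam ^ 2 + 1 / ν)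

/-- C₁ := −ν⁻¹·sinh(σΔt)/(σ·cosh(σΔt) + λ·sinh(σΔt)). -/
def C1 (ν Δt lam : ℝ) : ℝ :=
  -(ν⁻¹ * Real.sinh (sig ν lam * Δt)) /
    (sig ν lam * Real.cosh (sig ν lam * Δt) + lam * Real.sinh (sig ν lam * Δt))

/-- C₂ := σ/(σ·cosh(σΔt) + λ·sinh(σΔt)). -/
def C2 (ν Δt lam : ℝ) : ℝ :=
  sig ν lam /
    (sig ν lam * Real.cosh (sig ν lam * Δt) + lam * Real.sinh (sig ν lam * Δt))

/-- σ² + ν⁻¹ sinh²(σΔt) < (σ cosh(σΔt) + λ sinh(σΔt))², equivalently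
ν C₁² + C₂² < 1. -/
theorem rho_tilde_lt_one (ν Δt lam : ℝ)
    (hν : 0 < ν) (hΔt : 0 < Δt) (hlam : 0 < lam) :
    sig ν lam ^ 2 + ν⁻¹ * Real.sinh (sig ν lam * Δt) ^ 2 <
      (sig ν lam * Real.cosh (sig ν lam * Δt) + lam * Real.sinh (sig ν lam * Δt)) ^ 2 ∧
    ν * C1 ν Δt lam ^ 2 + C2 ν Δt lam ^ 2 < 1 := by
  have hpos : 0 < lam ^ 2 + 1 / ν := by positivity
  have hσ : 0 < sig ν lam := Real.sqrt_pos.mpr hpos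
  have hσ2 : sig ν lam ^ 2 = lam ^ 2 + ν⁻¹ := by
    unfold sig
    rw [Real.sq_sqrt hpos.le, one_div]
  unfold C1 C2
  have hs : 0 < Real.sinh (sig ν lam * Δt) := Real.sinh_pos_iff.mpr (mul_pos hσ hΔt)
  have hc : 0 < Real.cosh (sig ν lam * Δt) := Real.cosh_pos _
  have hcs := Real.cosh_sq (sig ν lam * Δt)
  generalize Real.sinh (sig ν lam * Δt) = s at *
  generalize Real.cosh (sig ν lam * Δt) = c at *
  generalize sig ν lam = σ at *
  have hD : 0 < σ * c + lam * s := by positivity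
  have h1 : σ ^ 2 + ν⁻¹ * s ^ 2 < (σ * c + lam * s) ^ 2 := by
    have e : (σ * c + lam * s) ^ 2
        = σ ^ 2 + ν⁻¹ * s ^ 2 + (2 * lam ^ 2 * s ^ 2 + 2 * σ * lam * c * s) := by
      linear_combination σ ^ 2 * hcs + s ^ 2 * hσ2
    have : 0 < 2 * lam ^ 2 * s ^ 2 + 2 * σ * lam * c * s := by positivity
    linarith
  refine ⟨h1, ?_⟩
  have e : ν * (-(ν⁻¹ * s) / (σ * c + lam * s)) ^ 2 + (σ / (σ * c + lam * s)) ^ 2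
      = (σ ^ 2 + ν⁻¹ * s ^ 2) / (σ * c + lam * s) ^ 2 := by
    field_simp
    ring
  rw [e, div_lt_one (by positivity)]
  exact h1
end
end

section
/- Fix ν > 0 and Δt > 0, and for λ ≥ 0 set σ(λ) := √(λ² + 1/ν) and ρ̃²(λ) := (σ(λ)² + ν⁻¹·sinh²(σ(λ)Δt)) / (σ(λ)·cosh(σ(λ)Δt) + λ·sinh(σ(λ)Δt))². Then the function λ ↦ ρ̃²(λ) is strictly decreasing on [0, ∞) and satisfies ρ̃²(0) = 1; in particular ρ̃²(λ) < 1 for every λ > 0. -/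
noncomputable section

/-- ρ̃²(λ) := (σ(λ)² + ν⁻¹ sinh²(σ(λ)Δt)) / (σ(λ) cosh(σ(λ)Δt) + λ sinh(σ(λ)Δt))². -/
def rhoTildeSq (ν Δt lam : ℝ) : ℝ :=
  (sig ν lam ^ 2 + ν⁻¹ * Real.sinh (sig ν lam * Δt) ^ 2) /
    (sig ν lam * Real.cosh (sig ν lam * Δt) + lam * Real.sinh (sig ν lam * Δt)) ^ 2

lemma sig_pos_aux (ν l : ℝ) (hν : 0 < ν) : 0 < sig ν l := by
  unfold sig; positivity

lemma sig_sq_aux (ν l : ℝ) (hν : 0 < ν) : sig ν l ^ 2 = l ^ 2 + ν⁻¹ := by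
  unfold sig
  rw [Real.sq_sqrt (by positivity), one_div]

lemma den_pos_aux (ν Δt l : ℝ) (hν : 0 < ν) (hΔt : 0 < Δt) (hl : 0 ≤ l) :
    0 < sig ν l * Real.cosh (sig ν l * Δt) + l * Real.sinh (sig ν l * Δt) := by
  have h1 := sig_pos_aux ν l hν
  have h2 := Real.cosh_pos (sig ν l * Δt)
  have h3 : 0 < Real.sinh (sig ν l * Δt) := Real.sinh_pos_iff.2 (by positivity)
  positivity

lemma rho_eq_aux (ν Δt l : ℝ) (hν : 0 < ν) (hΔt : 0 < Δt) (hl : 0 ≤ l) :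
    rhoTildeSq ν Δt l =
      (sig ν l * Real.cosh (sig ν l * Δt) - l * Real.sinh (sig ν l * Δt)) /
      (sig ν l * Real.cosh (sig ν l * Δt) + l * Real.sinh (sig ν l * Δt)) := by
  have hd := den_pos_aux ν Δt l hν hΔt hl
  have hs := sig_sq_aux ν l hν
  have hc := Real.cosh_sq (sig ν l * Δt)
  unfold rhoTildeSq
  rw [div_eq_div_iff (by positivity) hd.ne']
  have key : sig ν l ^ 2 + ν⁻¹ * Real.sinh (sig ν l * Δt) ^ 2 =
      (sig ν l * Real.cosh (sig ν l * Δt) - l * Real.sinh (sig ν l * Δt)) *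
      (sig ν l * Real.cosh (sig ν l * Δt) + l * Real.sinh (sig ν l * Δt)) := by
    have : ν⁻¹ = sig ν l ^ 2 - l ^ 2 := by linarith
    rw [this]
    linear_combination (-(sig ν l ^ 2)) * hc
  rw [key]; ring

lemma anti_aux (ν Δt : ℝ) (hν : 0 < ν) (hΔt : 0 < Δt) :
    StrictAntiOn (fun lam => rhoTildeSq ν Δt lam) (Set.Ici (0 : ℝ)) := by
  intro a ha b hb hab
  simp only [Set.mem_Ici] at ha hb
  show rhoTildeSq ν Δt b < rhoTildeSq ν Δt a
  rw [rho_eq_aux ν Δt a hν hΔt ha, rho_eq_aux ν Δt b hν hΔt hb,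
    div_lt_div_iff₀ (den_pos_aux ν Δt b hν hΔt hb) (den_pos_aux ν Δt a hν hΔt ha)]
  have pa := sig_pos_aux ν a hν
  have pb := sig_pos_aux ν b hν
  have qa := sig_sq_aux ν a hν
  have qb := sig_sq_aux ν b hν
  have hi : 0 < ν⁻¹ := by positivity
  have hsab : sig ν a ≤ sig ν b := by
    unfold sig; gcongr
  have h1 : a * sig ν b < b * sig ν a := by
    refine lt_of_pow_lt_pow_left₀ 2 (by positivity) ?_
    rw [mul_pow, mul_pow, qa, qb]
    have : a ^ 2 < b ^ 2 := by gcongr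
    nlinarith
  have hsub : 0 ≤ Real.sinh (sig ν b * Δt - sig ν a * Δt) :=
    Real.sinh_nonneg_iff.2 (by nlinarith)
  rw [Real.sinh_sub] at hsub
  have c1 := Real.cosh_pos (sig ν a * Δt)
  have s2 : 0 < Real.sinh (sig ν b * Δt) := Real.sinh_pos_iff.2 (by positivity)
  have e1 := mul_lt_mul_of_pos_right h1 (mul_pos s2 c1)
  have e2 := mul_nonneg (mul_nonneg ha pb.le) hsub
  nlinarith

lemma zero_aux (ν Δt : ℝ) (hν : 0 < ν) (hΔt : 0 < Δt) : rhoTildeSq ν Δt 0 = 1 := by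
  have hd := den_pos_aux ν Δt 0 hν hΔt le_rfl
  rw [rho_eq_aux ν Δt 0 hν hΔt le_rfl, div_eq_one_iff_eq hd.ne']
  ring

/-- λ ↦ ρ̃²(λ) is strictly decreasing on [0, ∞), ρ̃²(0) = 1, and
ρ̃²(λ) < 1 for every λ > 0. -/
theorem rhoTildeSq_strictAntiOn (ν Δt : ℝ) (hν : 0 < ν) (hΔt : 0 < Δt) :
    StrictAntiOn (fun lam => rhoTildeSq ν Δt lam) (Set.Ici (0 : ℝ)) ∧
    rhoTildeSq ν Δt 0 = 1 ∧
    ∀ lam : ℝ, 0 < lam → rhoTildeSq ν Δt lam < 1 := by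
  refine ⟨anti_aux ν Δt hν hΔt, zero_aux ν Δt hν hΔt, fun l hl => ?_⟩
  have h := anti_aux ν Δt hν hΔt (Set.mem_Ici.2 le_rfl) (Set.mem_Ici.2 hl.le) hl
  simp only [zero_aux ν Δt hν hΔt] at h
  exact h
end
end

section
/- Let ν > 0, Δt > 0, λ > 0, σ := √(λ² + 1/ν), C₁ := −ν⁻¹·sinh(σΔt)/(σ·cosh(σΔt) + λ·sinh(σΔt)) and C₂ := σ/(σ·cosh(σΔt) + λ·sinh(σΔt)). For every integer N ≥ 3, the infinity norm of T^PS_N (the maximum over rows of the sum of absolute values of the entries in that row) equals max(1, ν)·|C₁| + C₂; explicitly, it equals (σ + ν⁻¹·sinh(σΔt))/(σ·cosh(σΔt) + λ·sinh(σΔt)) if 0 < ν ≤ 1, and (σ + sinh(σΔt))/(σ·cosh(σΔt) + λ·sinh(σΔt)) if ν > 1. -/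
noncomputable section

/-- The block tridiagonal Toeplitz iteration matrix `T^PS_N` of size `2(N-1) × 2(N-1)`,
with diagonal blocks `T_d = [[0, C₁], [−ν C₁, 0]]`, superdiagonal blocks
`T_r = [[C₂, 0], [0, 0]]` and subdiagonal blocks `T_l = [[0, 0], [0, C₂]]`. -/
def TPS (ν Δt lam : ℝ) (N : ℕ) : Matrix (Fin (2 * (N - 1))) (Fin (2 * (N - 1))) ℝ :=
  fun i j =>
    if (i : ℕ) / 2 = (j : ℕ) / 2 then
      -- diagonal block T_d
      if (i : ℕ) % 2 = 0 ∧ (j : ℕ) % 2 = 1 then C1 ν Δt lam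
      else if (i : ℕ) % 2 = 1 ∧ (j : ℕ) % 2 = 0 then -ν * C1 ν Δt lam
      else 0
    else if (j : ℕ) / 2 = (i : ℕ) / 2 + 1 then
      -- superdiagonal block T_r
      if (i : ℕ) % 2 = 0 ∧ (j : ℕ) % 2 = 0 then C2 ν Δt lam else 0
    else if (i : ℕ) / 2 = (j : ℕ) / 2 + 1 then
      -- subdiagonal block T_l
      if (i : ℕ) % 2 = 1 ∧ (j : ℕ) % 2 = 1 then C2 ν Δt lam else 0
    else 0


theorem sum_fin_shift (n d m : ℕ) (c : ℝ) :
    ∑ j : Fin n, (if (j : ℕ) + d = m then c else 0) = if d ≤ m ∧ m < n + d then c else 0 := by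
  split_ifs with h
  · rw [Finset.sum_eq_single (⟨m - d, by omega⟩ : Fin n)]
    · rw [if_pos]
      simp only
      omega
    · intro b _ hb
      rw [if_neg]
      intro hh
      apply hb
      apply Fin.ext
      simp only
      omega
    · intro hh
      exact absurd (Finset.mem_univ _) hh
  · apply Finset.sum_eq_zero
    intro j _
    rw [if_neg]
    have := j.2
    omega

theorem row_even (ν Δt lam : ℝ) (N : ℕ) (hC : 0 ≤ C2 ν Δt lam)
    (i : Fin (2 * (N - 1))) (hi : (i : ℕ) % 2 = 0) :
    ∑ j : Fin (2 * (N - 1)), |TPS ν Δt lam N i j| =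
      |C1 ν Δt lam| + if (i : ℕ) + 2 < 2 * (N - 1) then C2 ν Δt lam else 0 := by
  have h : ∀ j : Fin (2 * (N - 1)), |TPS ν Δt lam N i j| =
      (if (j : ℕ) + 0 = (i : ℕ) + 1 then |C1 ν Δt lam| else 0) +
      (if (j : ℕ) + 0 = (i : ℕ) + 2 then C2 ν Δt lam else 0) := by
    intro j
    unfold TPS
    split_ifs <;> first | omega | simp [abs_of_nonneg hC]
  rw [Finset.sum_congr rfl (fun j _ => h j), Finset.sum_add_distrib, sum_fin_shift,
    sum_fin_shift, if_pos (by have := i.2; omega)]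
  simp

theorem row_odd (ν Δt lam : ℝ) (hν : 0 < ν) (N : ℕ) (hC : 0 ≤ C2 ν Δt lam)
    (i : Fin (2 * (N - 1))) (hi : (i : ℕ) % 2 = 1) :
    ∑ j : Fin (2 * (N - 1)), |TPS ν Δt lam N i j| =
      ν * |C1 ν Δt lam| + if 2 ≤ (i : ℕ) then C2 ν Δt lam else 0 := by
  have h : ∀ j : Fin (2 * (N - 1)), |TPS ν Δt lam N i j| =
      (if (j : ℕ) + 1 = (i : ℕ) then ν * |C1 ν Δt lam| else 0) +
      (if (j : ℕ) + 2 = (i : ℕ) then C2 ν Δt lam else 0) := by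
    intro j
    unfold TPS
    split_ifs <;> first | omega | simp [abs_of_nonneg hC, abs_mul, abs_of_pos hν]
  rw [Finset.sum_congr rfl (fun j _ => h j), Finset.sum_add_distrib, sum_fin_shift,
    sum_fin_shift, if_pos (by have := i.2; omega)]
  congr 1
  have := i.2
  split_ifs <;> first | rfl | omega

/-- for N ≥ 3, the infinity norm of `T^PS_N` (maximum over rows of the sum of
absolute values of the entries) equals max(1, ν)·|C₁| + C₂; explicitly it equals
(σ + ν⁻¹ sinh(σΔt))/(σ cosh(σΔt) + λ sinh(σΔt)) if ν ≤ 1 and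
(σ + sinh(σΔt))/(σ cosh(σΔt) + λ sinh(σΔt)) if ν > 1. -/
theorem TPS_infinity_norm (ν Δt lam : ℝ)
    (hν : 0 < ν) (hΔt : 0 < Δt) (hlam : 0 < lam) :
    ∀ N : ℕ, 3 ≤ N →
      (⨆ i : Fin (2 * (N - 1)), ∑ j : Fin (2 * (N - 1)), |TPS ν Δt lam N i j|) =
          max 1 ν * |C1 ν Δt lam| + C2 ν Δt lam ∧
      (ν ≤ 1 →
        (⨆ i : Fin (2 * (N - 1)), ∑ j : Fin (2 * (N - 1)), |TPS ν Δt lam N i j|) =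
          (sig ν lam + ν⁻¹ * Real.sinh (sig ν lam * Δt)) /
            (sig ν lam * Real.cosh (sig ν lam * Δt) + lam * Real.sinh (sig ν lam * Δt))) ∧
      (1 < ν →
        (⨆ i : Fin (2 * (N - 1)), ∑ j : Fin (2 * (N - 1)), |TPS ν Δt lam N i j|) =
          (sig ν lam + Real.sinh (sig ν lam * Δt)) /
            (sig ν lam * Real.cosh (sig ν lam * Δt) + lam * Real.sinh (sig ν lam * Δt))) := by
  intro N hN
  have hσ : 0 < sig ν lam := Real.sqrt_pos.2 (by positivity)
  have hs : 0 < Real.sinh (sig ν lam * Δt) := Real.sinh_pos_iff.2 (by positivity)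
  have hD : 0 < sig ν lam * Real.cosh (sig ν lam * Δt) + lam * Real.sinh (sig ν lam * Δt) := by
    have := Real.cosh_pos (sig ν lam * Δt)
    positivity
  have hC : 0 ≤ C2 ν Δt lam := by unfold C2; positivity
  have hC1 : |C1 ν Δt lam| = ν⁻¹ * Real.sinh (sig ν lam * Δt) /
      (sig ν lam * Real.cosh (sig ν lam * Δt) + lam * Real.sinh (sig ν lam * Δt)) := by
    unfold C1
    rw [neg_div, abs_neg, abs_of_pos (by positivity)]
  have main : (⨆ i : Fin (2 * (N - 1)), ∑ j : Fin (2 * (N - 1)), |TPS ν Δt lam N i j|) =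
          max 1 ν * |C1 ν Δt lam| + C2 ν Δt lam := by
    have : Nonempty (Fin (2 * (N - 1))) := ⟨⟨0, by omega⟩⟩
    have ha := abs_nonneg (C1 ν Δt lam)
    apply le_antisymm
    · apply ciSup_le
      intro i
      rcases Nat.mod_two_eq_zero_or_one (i : ℕ) with hi | hi
      · rw [row_even ν Δt lam N hC i hi]
        have h1 : 1 * |C1 ν Δt lam| ≤ max 1 ν * |C1 ν Δt lam| :=
          mul_le_mul_of_nonneg_right (le_max_left _ _) ha
        split_ifs <;> linarith
      · rw [row_odd ν Δt lam hν N hC i hi]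
        have h1 : ν * |C1 ν Δt lam| ≤ max 1 ν * |C1 ν Δt lam| :=
          mul_le_mul_of_nonneg_right (le_max_right _ _) ha
        split_ifs <;> linarith
    · have hb : BddAbove (Set.range fun i : Fin (2 * (N - 1)) =>
          ∑ j : Fin (2 * (N - 1)), |TPS ν Δt lam N i j|) := (Set.finite_range _).bddAbove
      rcases le_total ν 1 with h | h
      · refine le_trans (le_of_eq ?_) (le_ciSup hb ⟨0, by omega⟩)
        rw [row_even ν Δt lam N hC _ (by simp), max_eq_left h, if_pos (by simp only; omega), one_mul]
      · refine le_trans (le_of_eq ?_) (le_ciSup hb ⟨3, by omega⟩)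
        rw [row_odd ν Δt lam hν N hC _ (by simp), max_eq_right h, if_pos (by simp only; omega)]
  refine ⟨main, fun h => ?_, fun h => ?_⟩
  · rw [main, max_eq_left h, hC1, C2]
    ring
  · rw [main, max_eq_right h.le, hC1, C2]
    field_simp
    ring
end
end

section
/- Let ν > 0, Δt > 0, λ > 0, σ := √(λ² + 1/ν), C₁ := −ν⁻¹·sinh(σΔt)/(σ·cosh(σΔt) + λ·sinh(σΔt)) and C₂ := σ/(σ·cosh(σΔt) + λ·sinh(σΔt)). Define the region 𝒟 := {z ∈ ℂ : there exists θ ∈ [−π, π] such that Re z = C₂·cos(θ) and |Im z| ≤ √(C₂²·sin²(θ) + ν·C₁²)}. Then for every integer N ≥ 2, every complex eigenvalue of T^PS_N belongs to 𝒟. -/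
noncomputable section

/-- The region 𝒟 ⊂ ℂ of vertical segments: Re z = C₂ cos θ and
|Im z| ≤ √(C₂² sin²θ + ν C₁²) for some θ ∈ [−π, π]. -/
def Dregion (ν Δt lam : ℝ) : Set ℂ :=
  {z : ℂ | ∃ θ ∈ Set.Icc (-Real.pi) Real.pi,
    z.re = C2 ν Δt lam * Real.cos θ ∧
    |z.im| ≤ Real.sqrt (C2 ν Δt lam ^ 2 * Real.sin θ ^ 2 + ν * C1 ν Δt lam ^ 2)}


lemma seq_bounds (ν c d : ℝ) (hν : 0 < ν) (hd : 0 < d) (μ : ℂ) (n : ℕ) (a B : ℕ → ℂ)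
    (ha : a n = 0) (hB : B 0 = 0)
    (h1 : ∀ k < n, μ * a k = c * B (k + 1) + d * a (k + 1))
    (h2 : ∀ k < n, μ * B (k + 1) = -ν * c * a k + d * B k)
    (hne : ∃ k < n, a k ≠ 0 ∨ B (k + 1) ≠ 0) :
    |μ.re| ≤ d ∧ μ.re ^ 2 + μ.im ^ 2 ≤ ν * c ^ 2 + d ^ 2 := by
  set W : ℕ → ℝ := fun k => ν * Complex.normSq (a k) + Complex.normSq (B (k + 1)) with hW
  have hW0 : ∀ k, 0 ≤ W k := fun k =>
    add_nonneg (mul_nonneg hν.le (Complex.normSq_nonneg _)) (Complex.normSq_nonneg _)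
  have hpos : 0 < ∑ k ∈ Finset.range n, W k := by
    obtain ⟨k, hk, hk'⟩ := hne
    refine Finset.sum_pos' (fun i _ => hW0 i) ⟨k, Finset.mem_range.2 hk, ?_⟩
    rcases hk' with h | h
    · exact add_pos_of_pos_of_nonneg (mul_pos hν (Complex.normSq_pos.2 h))
        (Complex.normSq_nonneg _)
    · exact add_pos_of_nonneg_of_pos (mul_nonneg hν.le (Complex.normSq_nonneg _))
        (Complex.normSq_pos.2 h)
  -- telescoping principle
  have key : ∀ (e : ℝ) (g : ℕ → ℝ), (∀ k < n, e * W k ≤ g (k + 1) - g k) → g n ≤ 0 → 0 ≤ g 0 →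
      e ≤ 0 := by
    intro e g hg hn h0
    have hs : e * ∑ k ∈ Finset.range n, W k ≤ g n - g 0 := by
      rw [Finset.mul_sum, ← Finset.sum_range_sub]
      exact Finset.sum_le_sum fun k hk => hg k (Finset.mem_range.1 hk)
    by_contra! he
    have := mul_pos he hpos
    linarith
  have e1 : ∀ k < n, μ.re * (a k).re - μ.im * (a k).im = c * (B (k+1)).re + d * (a (k+1)).re :=
    fun k hk => by simpa using congrArg Complex.re (h1 k hk)
  have e2 : ∀ k < n, μ.re * (a k).im + μ.im * (a k).re = c * (B (k+1)).im + d * (a (k+1)).im :=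
    fun k hk => by simpa using congrArg Complex.im (h1 k hk)
  have e3 : ∀ k < n, μ.re * (B (k+1)).re - μ.im * (B (k+1)).im
      = -ν * c * (a k).re + d * (B k).re :=
    fun k hk => by simpa using congrArg Complex.re (h2 k hk)
  have e4 : ∀ k < n, μ.re * (B (k+1)).im + μ.im * (B (k+1)).re
      = -ν * c * (a k).im + d * (B k).im :=
    fun k hk => by simpa using congrArg Complex.im (h2 k hk)
  have hre : ∀ k < n, μ.re * W k = d * (ν * ((a (k+1)).re * (a k).re + (a (k+1)).im * (a k).im)
      + ((B k).re * (B (k+1)).re + (B k).im * (B (k+1)).im)) := by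
    intro k hk
    simp only [hW, Complex.normSq_apply]
    linear_combination ν * (a k).re * e1 k hk + ν * (a k).im * e2 k hk
      + (B (k+1)).re * e3 k hk + (B (k+1)).im * e4 k hk
  have hle : μ.re - d ≤ 0 := by
    refine key _ (fun k => d / 2 * (ν * Complex.normSq (a k) - Complex.normSq (B k))) ?_ ?_ ?_
    · intro k hk
      have h := hre k hk
      rw [sub_mul, h]
      simp only [hW, Complex.normSq_apply]
      have p1 : 0 ≤ d * ν * (((a (k+1)).re - (a k).re)^2 + ((a (k+1)).im - (a k).im)^2) := by
        positivity
      have p2 : 0 ≤ d * (((B (k+1)).re - (B k).re)^2 + ((B (k+1)).im - (B k).im)^2) := by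
        positivity
      linarith
    · have : 0 ≤ d / 2 * Complex.normSq (B n) := mul_nonneg (by linarith) (Complex.normSq_nonneg _)
      simp only [ha, map_zero]; linarith
    · have : 0 ≤ d / 2 * (ν * Complex.normSq (a 0)) :=
        mul_nonneg (by linarith) (mul_nonneg hν.le (Complex.normSq_nonneg _))
      simp only [hB, map_zero]; linarith
  have hge : -μ.re - d ≤ 0 := by
    refine key _ (fun k => d / 2 * (ν * Complex.normSq (a k) - Complex.normSq (B k))) ?_ ?_ ?_
    · intro k hk
      have h := hre k hk
      rw [sub_mul, neg_mul, h]
      simp only [hW, Complex.normSq_apply]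
      have p1 : 0 ≤ d * ν * (((a (k+1)).re + (a k).re)^2 + ((a (k+1)).im + (a k).im)^2) := by
        positivity
      have p2 : 0 ≤ d * (((B (k+1)).re + (B k).re)^2 + ((B (k+1)).im + (B k).im)^2) := by
        positivity
      linarith
    · have : 0 ≤ d / 2 * Complex.normSq (B n) := mul_nonneg (by linarith) (Complex.normSq_nonneg _)
      simp only [ha, map_zero]; linarith
    · have : 0 ≤ d / 2 * (ν * Complex.normSq (a 0)) :=
        mul_nonneg (by linarith) (mul_nonneg hν.le (Complex.normSq_nonneg _))
      simp only [hB, map_zero]; linarith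
  refine ⟨abs_le.2 ⟨by linarith, by linarith⟩, ?_⟩
  have : μ.re ^ 2 + μ.im ^ 2 - (ν * c ^ 2 + d ^ 2) ≤ 0 := by
    refine key _ (fun k => 2 * ν * c * d * ((B k).re * (a k).re + (B k).im * (a k).im)
      + d ^ 2 * (ν * Complex.normSq (a k) - Complex.normSq (B k))) ?_ ?_ ?_
    · intro k hk
      apply le_of_eq
      have q1 := congrArg (· ^ 2) (e1 k hk)
      have q2 := congrArg (· ^ 2) (e2 k hk)
      have q3 := congrArg (· ^ 2) (e3 k hk)
      have q4 := congrArg (· ^ 2) (e4 k hk)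
      simp only [hW, Complex.normSq_apply]
      linear_combination ν * q1 + ν * q2 + q3 + q4
    · have : 0 ≤ d ^ 2 * Complex.normSq (B n) := mul_nonneg (by positivity) (Complex.normSq_nonneg _)
      simp only [ha, map_zero, Complex.zero_re, Complex.zero_im]; linarith
    · have : 0 ≤ d ^ 2 * (ν * Complex.normSq (a 0)) :=
        mul_nonneg (by positivity) (mul_nonneg hν.le (Complex.normSq_nonneg _))
      simp only [hB, map_zero, Complex.zero_re, Complex.zero_im]; linarith
  linarith

/-- for every N ≥ 2, every complex eigenvalue of `T^PS_N` belongs to 𝒟. -/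
theorem eigenvalues_in_Dregion (ν Δt lam : ℝ)
    (hν : 0 < ν) (hΔt : 0 < Δt) (hlam : 0 < lam) :
    ∀ N : ℕ, 2 ≤ N → ∀ μ : ℂ,
      ((TPS ν Δt lam N).map (fun x => (x : ℂ))).charpoly.IsRoot μ →
      μ ∈ Dregion ν Δt lam := by
  intro N hN μ hμ
  have hs : 0 < sig ν lam := Real.sqrt_pos.2 (by positivity)
  have hd : 0 < C2 ν Δt lam := by
    have h1 : 0 < Real.sinh (sig ν lam * Δt) := Real.sinh_pos_iff.2 (mul_pos hs hΔt)
    have h2 : 0 < Real.cosh (sig ν lam * Δt) := Real.cosh_pos _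
    unfold C2
    positivity
  obtain ⟨v, hv0, hv⟩ : ∃ v : Fin (2 * (N - 1)) → ℂ, v ≠ 0 ∧
      ((TPS ν Δt lam N).map (fun x => (x : ℂ))).mulVec v = μ • v := by
    rw [Polynomial.IsRoot, Matrix.eval_charpoly] at hμ
    obtain ⟨v, hv0, hv⟩ := Matrix.exists_mulVec_eq_zero_iff.2 hμ
    refine ⟨v, hv0, ?_⟩
    rw [Matrix.sub_mulVec, sub_eq_zero] at hv
    rw [← hv]
    ext i
    simp [Matrix.scalar_apply, Matrix.mulVec_diagonal]
  set u : ℕ → ℂ := fun q => ∑ j : Fin (2 * (N - 1)), if (j : ℕ) + 1 = q then v j else 0 with hu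
  have huv : ∀ j : Fin (2 * (N - 1)), u (j + 1) = v j := by
    intro j
    simp only [hu]
    rw [Finset.sum_eq_single j]
    · simp
    · intro b _ hb
      rw [if_neg]
      intro h
      exact hb (Fin.ext (by omega))
    · simp
  have hrow : ∀ i : Fin (2 * (N - 1)), μ * v i = ∑ j, ((TPS ν Δt lam N i j : ℝ) : ℂ) * v j := by
    intro i
    have := congrFun hv i
    simpa [Matrix.mulVec, dotProduct] using this.symm
  have hbd := seq_bounds ν (C1 ν Δt lam) (C2 ν Δt lam) hν hd μ (N - 1)
    (fun k => u (2 * k + 1)) (fun k => u (2 * k)) ?_ ?_ ?_ ?_ ?_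
  · obtain ⟨hr, hn⟩ := hbd
    obtain ⟨hr1, hr2⟩ := abs_le.1 hr
    have hc : Real.cos (Real.arccos (μ.re / C2 ν Δt lam)) = μ.re / C2 ν Δt lam :=
      Real.cos_arccos (by rw [le_div_iff₀ hd]; linarith) (by rw [div_le_iff₀ hd]; linarith)
    have hre : μ.re = C2 ν Δt lam * Real.cos (Real.arccos (μ.re / C2 ν Δt lam)) := by
      rw [hc]; field_simp
    refine ⟨Real.arccos (μ.re / C2 ν Δt lam), ⟨?_, Real.arccos_le_pi _⟩, hre, ?_⟩
    · linarith [Real.arccos_nonneg (μ.re / C2 ν Δt lam), Real.pi_pos]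
    · apply Real.le_sqrt_of_sq_le
      rw [sq_abs, Real.sin_sq]
      have := congrArg (· ^ 2) hre
      simp only [mul_pow] at this
      linarith
  · simp only [hu]
    refine Finset.sum_eq_zero fun j _ => if_neg ?_
    have := j.2
    omega
  · simp [hu]
  · intro k hk
    have hi : 2 * k < 2 * (N - 1) := by omega
    have := hrow ⟨2 * k, hi⟩
    rw [← huv] at this
    simp only at this ⊢
    rw [this]
    simp only [hu, Finset.mul_sum, ← Finset.sum_add_distrib]
    refine Finset.sum_congr rfl fun j _ => ?_
    simp only [TPS]
    split_ifs <;> first | omega | simp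
  · intro k hk
    have hi : 2 * k + 1 < 2 * (N - 1) := by omega
    have := hrow ⟨2 * k + 1, hi⟩
    rw [← huv] at this
    simp only at this ⊢
    rw [show 2 * (k + 1) = 2 * k + 1 + 1 by ring, this]
    simp only [hu, Finset.mul_sum, ← Finset.sum_add_distrib]
    refine Finset.sum_congr rfl fun j _ => ?_
    simp only [TPS]
    split_ifs <;> first | omega | simp
  · obtain ⟨j, hj⟩ := Function.ne_iff.1 hv0
    have hj2 := j.2
    refine ⟨j / 2, by omega, ?_⟩
    rw [← huv] at hj
    rcases Nat.mod_two_eq_zero_or_one (j : ℕ) with h | h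
    · left
      have : 2 * ((j : ℕ) / 2) + 1 = j + 1 := by omega
      simpa only [this, Pi.zero_apply] using hj
    · right
      have : 2 * ((j : ℕ) / 2 + 1) = j + 1 := by omega
      simpa only [this, Pi.zero_apply] using hj
end
end

section
/- Let ν > 0, Δt > 0, λ > 0, σ := √(λ² + 1/ν), C₁ := −ν⁻¹·sinh(σΔt)/(σ·cosh(σΔt) + λ·sinh(σΔt)), C₂ := σ/(σ·cosh(σΔt) + λ·sinh(σΔt)), and Φ := {C₂·cos(θ) + ε·i·√(C₂²·sin²(θ) + ν·C₁²) : θ ∈ [−π, π], ε ∈ {−1, +1}} ⊂ ℂ. Then Φ is an eigenvalue cluster for the sequence of matrices (T^PS_N)_{N≥2}: for every open set O ⊆ ℂ with Φ ⊆ O, the number of complex eigenvalues of T^PS_N (counted with multiplicity as roots of the characteristic polynomial) lying outside O, divided by N, tends to 0 as N → ∞. -/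
noncomputable section

/-- The limit spectrum Φ: the two closed curves θ ↦ C₂ cos θ ± i √(C₂² sin²θ + ν C₁²). -/
def PhiSet (ν Δt lam : ℝ) : Set ℂ :=
  {z : ℂ | ∃ θ ∈ Set.Icc (-Real.pi) Real.pi, ∃ ε : ℝ, (ε = 1 ∨ ε = -1) ∧
    z = (C2 ν Δt lam * Real.cos θ : ℝ) + (ε : ℂ) * Complex.I *
          (Real.sqrt (C2 ν Δt lam ^ 2 * Real.sin θ ^ 2 + ν * C1 ν Δt lam ^ 2) : ℝ)}

lemma aux_denom_pos (ν Δt lam : ℝ) (hν : 0 < ν) (hΔt : 0 < Δt) (hlam : 0 < lam) :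
    0 < sig ν lam ∧ 0 < Real.sinh (sig ν lam * Δt) ∧
    0 < sig ν lam * Real.cosh (sig ν lam * Δt) + lam * Real.sinh (sig ν lam * Δt) := by
  have h1 : 0 < sig ν lam := by
    unfold sig
    positivity
  have h2 : 0 < Real.sinh (sig ν lam * Δt) := Real.sinh_pos_iff.2 (by positivity)
  have h3 := Real.cosh_pos (sig ν lam * Δt)
  exact ⟨h1, h2, by positivity⟩

lemma aux_C2_pos (ν Δt lam : ℝ) (hν : 0 < ν) (hΔt : 0 < Δt) (hlam : 0 < lam) :
    0 < C2 ν Δt lam := by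
  obtain ⟨h1, h2, h3⟩ := aux_denom_pos ν Δt lam hν hΔt hlam
  unfold C2
  exact div_pos h1 h3

lemma aux_C1_ne (ν Δt lam : ℝ) (hν : 0 < ν) (hΔt : 0 < Δt) (hlam : 0 < lam) :
    C1 ν Δt lam ≠ 0 := by
  obtain ⟨h1, h2, h3⟩ := aux_denom_pos ν Δt lam hν hΔt hlam
  unfold C1
  have : 0 < ν⁻¹ * Real.sinh (sig ν lam * Δt) := by positivity
  exact div_ne_zero (by linarith) h3.ne'

lemma aux_eig (ν Δt lam : ℝ) (N : ℕ) (z : ℂ)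
    (hz : z ∈ ((TPS ν Δt lam N).map (fun x => (x : ℂ))).charpoly.roots) :
    ∃ f : ℕ → ℂ, (∃ i < 2 * (N - 1), f i ≠ 0) ∧ (∀ j, 2 * (N - 1) ≤ j → f j = 0) ∧
      (∀ k < N - 1, (C1 ν Δt lam : ℂ) * f (2*k+1) + C2 ν Δt lam * f (2*k+2) = z * f (2*k)) ∧
      (0 < N - 1 → -(ν:ℂ) * C1 ν Δt lam * f 0 = z * f 1) ∧
      (∀ k, k + 1 < N - 1 →
        -(ν:ℂ) * C1 ν Δt lam * f (2*k+2) + C2 ν Δt lam * f (2*k+1) = z * f (2*k+3)) := by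
  have h0 := (Polynomial.mem_roots'.1 hz).2
  rw [Polynomial.IsRoot.def, Matrix.eval_charpoly] at h0
  obtain ⟨v, hv, hmul⟩ := Matrix.exists_mulVec_eq_zero_iff.2 h0
  have hE : ∀ i, ∑ j, ((TPS ν Δt lam N i j : ℝ) : ℂ) * v j = z * v i := by
    intro i
    have := congrFun hmul i
    rw [Matrix.sub_mulVec] at this
    simp only [Pi.sub_apply, Pi.zero_apply, sub_eq_zero] at this
    simpa [Matrix.mulVec, dotProduct, Matrix.diagonal_apply] using this.symm
  let f : ℕ → ℂ := fun j => if h : j < 2 * (N - 1) then v ⟨j, h⟩ else 0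
  have hf : ∀ j : Fin (2 * (N - 1)), f j = v j := by
    intro j
    simp [f]
  have hf0 : ∀ j, 2 * (N - 1) ≤ j → f j = 0 := by
    intro j hj
    simp [f, not_lt.2 hj]
  have hrow : ∀ i : Fin (2*(N - 1)), ∀ G : ℕ → ℂ,
      (∀ j : Fin (2*(N - 1)), ((TPS ν Δt lam N i j : ℝ) : ℂ) * f j = G j) →
      ∑ j ∈ Finset.range (2 * (N - 1)), G j = z * f i := by
    intro i G hG
    rw [hf, ← hE i, ← Fin.sum_univ_eq_sum_range]
    refine Finset.sum_congr rfl fun j _ => ?_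
    rw [← hG j, hf]
  refine ⟨f, ?_, hf0, ?_, ?_, ?_⟩
  · obtain ⟨i, hi⟩ := Function.ne_iff.1 hv
    exact ⟨i, i.2, by rw [hf]; exact hi⟩
  · intro k hk
    have := hrow ⟨2*k, by omega⟩ (fun j => (if j = 2*k+1 then (C1 ν Δt lam : ℂ) * f (2*k+1) else 0)
      + (if j = 2*k+2 then (C2 ν Δt lam : ℂ) * f (2*k+2) else 0)) ?_
    · rw [Finset.sum_add_distrib, Finset.sum_ite_eq', Finset.sum_ite_eq',
        if_pos (by simp; omega)] at this
      rw [← this]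
      split_ifs with h
      · rfl
      · rw [hf0 (2*k+2) (by simpa using h)]
        simp
    · rintro ⟨j, hj⟩
      unfold TPS
      dsimp only
      by_cases h1 : j = 2*k+1
      · subst h1
        rw [if_pos (by omega), if_pos (by omega)]
        simp
      by_cases h2 : j = 2*k+2
      · subst h2
        rw [if_neg (by omega), if_pos (by omega), if_pos (by omega)]
        simp
      · split_ifs <;> first | omega | (simp; done) | simp_all
  · intro hk
    have := hrow ⟨1, by omega⟩
      (fun j => (if j = 0 then -(ν:ℂ) * (C1 ν Δt lam : ℂ) * f 0 else 0)) ?_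
    · rw [Finset.sum_ite_eq', if_pos (by simp; omega)] at this
      exact this
    · rintro ⟨j, hj⟩
      unfold TPS
      dsimp only
      by_cases h1 : j = 0
      · subst h1
        rw [if_pos (by omega), if_neg (by omega), if_pos (by omega)]
        simp
      · split_ifs <;> first | omega | (simp; done) | simp_all
  · intro k hk
    have := hrow ⟨2*k+3, by omega⟩
      (fun j => (if j = 2*k+2 then -(ν:ℂ) * (C1 ν Δt lam : ℂ) * f (2*k+2) else 0)
      + (if j = 2*k+1 then (C2 ν Δt lam : ℂ) * f (2*k+1) else 0)) ?_
    · rw [Finset.sum_add_distrib, Finset.sum_ite_eq', Finset.sum_ite_eq',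
        if_pos (by simp; omega), if_pos (by simp; omega)] at this
      exact this
    · rintro ⟨j, hj⟩
      unfold TPS
      dsimp only
      by_cases h1 : j = 2*k+2
      · subst h1
        rw [if_pos (by omega), if_neg (by omega), if_pos (by omega)]
        simp
      by_cases h2 : j = 2*k+1
      · subst h2
        rw [if_neg (by omega), if_neg (by omega), if_pos (by omega), if_pos (by omega)]
        simp
      · split_ifs <;> first | omega | (simp; done) | simp_all

lemma aux_bound (ν c1 c2 : ℝ) (hν : 0 < ν) (n : ℕ) (z : ℂ) (f : ℕ → ℂ)
    (hne : ∃ i < 2 * n, f i ≠ 0) (hf0 : ∀ j, 2 * n ≤ j → f j = 0)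
    (h1 : ∀ k < n, (c1 : ℂ) * f (2*k+1) + c2 * f (2*k+2) = z * f (2*k))
    (h2 : 0 < n → -(ν:ℂ) * c1 * f 0 = z * f 1)
    (h3 : ∀ k, k + 1 < n → -(ν:ℂ) * c1 * f (2*k+2) + c2 * f (2*k+1) = z * f (2*k+3)) :
    ‖z‖ ≤ |c1| + ν * |c1| + |c2| := by
  obtain ⟨i0, hi0, hfi0⟩ := hne
  obtain ⟨i, hi, hmax⟩ := Finset.exists_max_image (Finset.range (2*n)) (fun j => ‖f j‖)
    ⟨i0, by simpa using hi0⟩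
  have hM : ∀ j, ‖f j‖ ≤ ‖f i‖ := by
    intro j
    by_cases hj : j < 2 * n
    · exact hmax j (by simpa using hj)
    · rw [hf0 j (by omega)]
      simp
  have hpos : 0 < ‖f i‖ := lt_of_lt_of_le (norm_pos_iff.2 hfi0) (hM i0)
  have hi' : i < 2 * n := by simpa using hi
  have key : ‖z * f i‖ ≤ (|c1| + ν * |c1| + |c2|) * ‖f i‖ := by
    have e1 : ∀ j, |c1| * ‖f j‖ ≤ |c1| * ‖f i‖ := fun j => by gcongr; exact hM j
    have e2 : ∀ j, |c2| * ‖f j‖ ≤ |c2| * ‖f i‖ := fun j => by gcongr; exact hM j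
    have e3 : ∀ j, ν * |c1| * ‖f j‖ ≤ ν * |c1| * ‖f i‖ := fun j => by gcongr; exact hM j
    have p1 : 0 ≤ |c1| * ‖f i‖ := by positivity
    have p2 : 0 ≤ |c2| * ‖f i‖ := by positivity
    have p3 : 0 ≤ ν * |c1| * ‖f i‖ := by positivity
    have n1 : ∀ j, ‖(c1:ℂ) * f j‖ = |c1| * ‖f j‖ := fun j => by simp
    have n2 : ∀ j, ‖(c2:ℂ) * f j‖ = |c2| * ‖f j‖ := fun j => by simp
    have n3 : ∀ j, ‖-(ν:ℂ) * c1 * f j‖ = ν * |c1| * ‖f j‖ := fun j => by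
      simp [abs_of_pos hν]
    rcases Nat.even_or_odd' i with ⟨k, hk | hk⟩
    · have hh := h1 k (by omega)
      rw [← hk] at hh
      rw [← hh]
      refine (norm_add_le _ _).trans ?_
      rw [n1, n2]
      linarith [e1 (i+1), e2 (i+2)]
    · rcases k with _ | k
      · have hk' : i = 1 := by omega
        rw [hk', ← h2 (by omega), ← hk', n3]
        linarith [e3 0]
      · have hk' : i = 2*k+3 := by omega
        rw [hk', ← h3 k (by omega), ← hk']
        refine (norm_add_le _ _).trans ?_
        rw [n3, n2]
        linarith [e3 (2*k+2), e2 (2*k+1)]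
  rw [norm_mul] at key
  exact le_of_mul_le_mul_right key hpos

lemma aux_key (ν c1 c2 : ℝ) (hν : 0 < ν) (hc1 : c1 ≠ 0) (hc2 : 0 < c2) (n : ℕ) (hn : 0 < n)
    (z : ℂ) (f : ℕ → ℂ)
    (hne : ∃ i < 2 * n, f i ≠ 0) (hf0 : ∀ j, 2 * n ≤ j → f j = 0)
    (h1 : ∀ k < n, (c1 : ℂ) * f (2*k+1) + c2 * f (2*k+2) = z * f (2*k))
    (h2 : 0 < n → -(ν:ℂ) * c1 * f 0 = z * f 1)
    (h3 : ∀ k, k + 1 < n → -(ν:ℂ) * c1 * f (2*k+2) + c2 * f (2*k+1) = z * f (2*k+3))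
    (p q : ℂ) (hs : p + q = z^2 + ν * c1^2 + c2^2) (hp : p * q = (z * c2)^2) :
    p^n * (p - c2^2) = q^n * (q - c2^2) := by
  have hc1' : (c1:ℂ) ≠ 0 := by exact_mod_cast hc1
  have hc2' : (c2:ℂ) ≠ 0 := by exact_mod_cast hc2.ne'
  have r0 : z * c2 * f 2 = (z^2 + ν * c1^2) * f 0 := by
    have a := h1 0 hn
    have b := h2 hn
    simp only [mul_zero, zero_add] at a
    linear_combination z * a + c1 * b
  have r1 : ∀ k, k + 1 < n →
      z * c2 * f (2*k+4) = (z^2 + ν * c1^2 + c2^2) * f (2*k+2) - z * c2 * f (2*k) := by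
    intro k hk
    have a := h1 k (by omega)
    have b := h1 (k+1) hk
    have c := h3 k hk
    have e1 : 2 * (k+1) + 1 = 2*k+3 := by ring
    have e2 : 2 * (k+1) + 2 = 2*k+4 := by ring
    have e3 : 2 * (k+1) = 2*k+2 := by ring
    rw [e1, e2, e3] at b
    linear_combination z * b + c1 * c - c2 * a
  have hVne : ¬ ∀ k ≤ n, f (2*k) = 0 := by
    intro hV
    obtain ⟨i, hi, hfi⟩ := hne
    rcases Nat.even_or_odd' i with ⟨k, hk | hk⟩
    · exact hfi (hk ▸ hV k (by omega))
    · have a := h1 k (by omega)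
      have e3 : 2 * k + 2 = 2*(k+1) := by ring
      rw [e3, hV k (by omega), hV (k+1) (by omega)] at a
      simp only [mul_zero, add_zero, mul_eq_zero, hc1', false_or] at a
      exact hfi (hk ▸ a)
  have hApos : 0 < ν * c1^2 := by positivity
  have hA : (ν * c1^2 : ℂ) ≠ 0 := by exact_mod_cast hApos.ne'
  have hB : (ν * c1^2 + c2^2 : ℂ) ≠ 0 := by
    have : 0 < ν * c1^2 + c2^2 := by positivity
    exact_mod_cast this.ne'
  have hz : z ≠ 0 := by
    rintro rfl
    apply hVne
    intro k hk
    rcases k with _ | k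
    · have : (ν * c1^2 : ℂ) * f 0 = 0 := by linear_combination -r0
      simpa [hA] using this
    · rcases hk.lt_or_eq with hk | hk
      · have : (ν * c1^2 + c2^2 : ℂ) * f (2*k+2) = 0 := by linear_combination -(r1 k hk)
        have := (mul_eq_zero.1 this).resolve_left hB
        exact this
      · exact hf0 _ (by omega)
  have hzc : z * c2 ≠ 0 := mul_ne_zero hz hc2'
  have hf00 : f 0 ≠ 0 := by
    intro h0
    apply hVne
    have : ∀ k, (k ≤ n → f (2*k) = 0) ∧ (k + 1 ≤ n → f (2*k+2) = 0) := by
      intro k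
      induction k with
      | zero =>
        refine ⟨fun _ => h0, fun _ => ?_⟩
        rw [h0, mul_zero] at r0
        exact (mul_eq_zero.1 r0).resolve_left hzc
      | succ k ih =>
        refine ⟨ih.2, fun hk => ?_⟩
        have := r1 k (by omega)
        rw [ih.1 (by omega), ih.2 (by omega)] at this
        simp only [mul_zero, sub_zero] at this
        exact (mul_eq_zero.1 this).resolve_left hzc
    exact fun k hk => (this k).1 hk
  have main : ∀ k, (k ≤ n → (p - q) * ((z*c2)^k * f (2*k)) =
        ((p^(k+1) - q^(k+1)) - c2^2 * (p^k - q^k)) * f 0) ∧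
      (k + 1 ≤ n → (p - q) * ((z*c2)^(k+1) * f (2*k+2)) =
        ((p^(k+2) - q^(k+2)) - c2^2 * (p^(k+1) - q^(k+1))) * f 0) := by
    intro k
    induction k with
    | zero =>
      refine ⟨fun _ => by simp, fun _ => ?_⟩
      simp only [mul_zero, zero_add]
      linear_combination (p - q) * r0 - (p-q) * f 0 * hs
    | succ k ih =>
      refine ⟨ih.2, fun hk => ?_⟩
      have a := r1 k (by omega)
      have i1 := ih.1 (by omega)
      have i2 := ih.2 (by omega)
      have e : 2 * (k+1) + 2 = 2*k+4 := by ring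
      rw [e]
      have : (p - q) * ((z*c2)^(k+2) * f (2*k+4)) =
          (p + q) * ((p - q) * ((z*c2)^(k+1) * f (2*k+2)))
            - (p * q) * ((p-q) * ((z*c2)^k * f (2*k))) := by
        rw [hs, hp]
        linear_combination (p - q) * (z*c2)^(k+1) * a
      rw [show k + 1 + 1 = k + 2 from rfl, this, i1, i2]
      ring
  have fin := (main n).1 le_rfl
  rw [hf0 (2*n) le_rfl] at fin
  simp only [mul_zero] at fin
  have := (mul_eq_zero.1 fin.symm).resolve_right hf00
  linear_combination this

lemma aux_mem (ν c1 c2 : ℝ) (hν : 0 < ν) (hc1 : c1 ≠ 0) (hc2 : 0 < c2) (z p q : ℂ)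
    (hs : p + q = z^2 + ν * c1^2 + c2^2) (hp : p * q = (z * c2)^2) (hn : ‖p‖ = ‖q‖) :
    ∃ θ ∈ Set.Icc (-Real.pi) Real.pi, ∃ ε : ℝ, (ε = 1 ∨ ε = -1) ∧
    z = (c2 * Real.cos θ : ℝ) + (ε : ℂ) * Complex.I *
          (Real.sqrt (c2 ^ 2 * Real.sin θ ^ 2 + ν * c1 ^ 2) : ℝ) := by
  have hc2' : (c2:ℂ) ≠ 0 := by exact_mod_cast hc2.ne'
  have hz : z ≠ 0 := by
    rintro rfl
    have hB : (ν * c1^2 + c2^2 : ℂ) ≠ 0 := by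
      have : 0 < ν * c1^2 + c2^2 := by positivity
      exact_mod_cast this.ne'
    have h0 : p = 0 ∧ q = 0 := by
      have : p * q = 0 := by rw [hp]; ring
      rcases mul_eq_zero.1 this with h | h
      · subst h
        exact ⟨rfl, by simpa using hn.symm⟩
      · subst h
        exact ⟨by simpa using hn, rfl⟩
    apply hB
    rw [h0.1, h0.2] at hs
    linear_combination -hs
  have hzc : z * c2 ≠ 0 := mul_ne_zero hz hc2'
  have hnp : ‖p‖ = ‖z * c2‖ := by
    have := congrArg norm hp
    rw [norm_mul, norm_pow, ← hn] at this
    have h2 : ‖p‖^2 = ‖z * c2‖^2 := by rw [← this]; ring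
    exact (sq_eq_sq₀ (norm_nonneg _) (norm_nonneg _)).1 h2
  set t := p / (z * c2) with ht
  have hpt : p = z * c2 * t := by rw [ht]; field_simp
  have htn : ‖t‖ = 1 := by
    rw [ht, norm_div, hnp]
    exact div_self (norm_ne_zero_iff.2 hzc)
  obtain ⟨θ, hθ, hθt⟩ : ∃ θ ∈ Set.Icc (-Real.pi) Real.pi, t = Complex.exp (θ * Complex.I) := by
    refine ⟨Complex.arg t, ⟨(Complex.neg_pi_lt_arg t).le, Complex.arg_le_pi t⟩, ?_⟩
    have := Complex.norm_mul_exp_arg_mul_I t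
    rw [htn] at this
    simpa using this.symm
  have hq : q = z * c2 * Complex.exp (-(θ * Complex.I)) := by
    have hmul : Complex.exp (θ * Complex.I) * Complex.exp (-(θ * Complex.I)) = 1 := by
      rw [← Complex.exp_add]; simp
    have h1 : t * q = z * c2 := by
      apply mul_left_cancel₀ hzc
      rw [hpt] at hp
      linear_combination hp
    rw [hθt] at h1
    linear_combination (-q) * hmul + Complex.exp (-(θ * Complex.I)) * h1
  have hcos : Complex.exp (θ * Complex.I) + Complex.exp (-(θ * Complex.I)) = 2 * Real.cos θ := by
    rw [Complex.ofReal_cos, Complex.two_cos, neg_mul]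
  refine ⟨θ, hθ, ?_⟩
  set s := Real.sqrt (c2 ^ 2 * Real.sin θ ^ 2 + ν * c1 ^ 2) with hsdef
  have hs2 : s^2 = c2 ^ 2 * Real.sin θ ^ 2 + ν * c1 ^ 2 := Real.sq_sqrt (by positivity)
  have hs2' : (s:ℂ)^2 = c2 ^ 2 * (Real.sin θ : ℂ) ^ 2 + ν * c1 ^ 2 := by exact_mod_cast hs2
  have hsc : (Real.sin θ : ℂ)^2 + (Real.cos θ : ℂ)^2 = 1 := by
    exact_mod_cast Real.sin_sq_add_cos_sq θ
  have hquad : (z - c2 * Real.cos θ)^2 = (Complex.I * s)^2 := by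
    rw [hpt, hq, hθt] at hs
    rw [mul_pow, Complex.I_sq, hs2']
    linear_combination -hs + z * c2 * hcos + c2^2 * hsc
  rcases sq_eq_sq_iff_eq_or_eq_neg.1 hquad with h | h
  · refine ⟨1, Or.inl rfl, ?_⟩
    simp only [Complex.ofReal_mul, Complex.ofReal_one, Complex.ofReal_neg]
    linear_combination h
  · refine ⟨-1, Or.inr rfl, ?_⟩
    simp only [Complex.ofReal_mul, Complex.ofReal_one, Complex.ofReal_neg]
    linear_combination h

lemma aux_pq (b d : ℂ) : ∃ p q : ℂ, p + q = b ∧ p * q = d ∧ ‖q‖ ≤ ‖p‖ := by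
  obtain ⟨s, hs⟩ := IsAlgClosed.exists_pow_nat_eq (b^2 - 4 * d) (n := 2) (by norm_num)
  have h1 : (b + s)/2 + (b - s)/2 = b := by ring
  have h2 : (b + s)/2 * ((b - s)/2) = d := by linear_combination -hs/4
  rcases le_total ‖(b - s)/2‖ ‖(b + s)/2‖ with h | h
  · exact ⟨_, _, h1, h2, h⟩
  · exact ⟨_, _, by rw [add_comm]; exact h1, by rw [mul_comm]; exact h2, h⟩

lemma aux_large (ν c1 c2 : ℝ) (hν : 0 < ν) (hc1 : c1 ≠ 0) (hc2 : 0 < c2) (R : ℝ)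
    (O : Set ℂ) (hO : IsOpen O)
    (hgap : ∀ z p q : ℂ, z ∉ O → p + q = z^2 + ν * c1^2 + c2^2 → p * q = (z * c2)^2 → ‖p‖ ≠ ‖q‖) :
    ∃ n0 : ℕ, 0 < n0 ∧ ∀ n ≥ n0, ∀ z p q : ℂ, ‖z‖ ≤ R → z ∉ O →
      p + q = z^2 + ν * c1^2 + c2^2 → p * q = (z * c2)^2 → ‖q‖ ≤ ‖p‖ →
      p^n * (p - c2^2) ≠ q^n * (q - c2^2) := by
  let K : Set (ℂ × ℂ × ℂ) := {x | ‖x.1‖ ≤ R ∧ x.1 ∈ Oᶜ ∧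
    x.2.1 + x.2.2 = x.1^2 + ν * c1^2 + c2^2 ∧ x.2.1 * x.2.2 = (x.1 * c2)^2 ∧ ‖x.2.2‖ ≤ ‖x.2.1‖}
  have hKc : IsClosed K := by
    have k1 : IsClosed {x : ℂ × ℂ × ℂ | ‖x.1‖ ≤ R} := isClosed_le (by fun_prop) (by fun_prop)
    have k2 : IsClosed {x : ℂ × ℂ × ℂ | x.1 ∈ Oᶜ} := hO.isClosed_compl.preimage continuous_fst
    have k3 : IsClosed {x : ℂ × ℂ × ℂ | x.2.1 + x.2.2 = x.1^2 + ν * c1^2 + c2^2} :=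
      isClosed_eq (by fun_prop) (by fun_prop)
    have k4 : IsClosed {x : ℂ × ℂ × ℂ | x.2.1 * x.2.2 = (x.1 * c2)^2} :=
      isClosed_eq (by fun_prop) (by fun_prop)
    have k5 : IsClosed {x : ℂ × ℂ × ℂ | ‖x.2.2‖ ≤ ‖x.2.1‖} :=
      isClosed_le (by fun_prop) (by fun_prop)
    exact k1.inter (k2.inter (k3.inter (k4.inter k5)))
  set M : ℝ := R^2 + ν * c1^2 + c2^2 + |R| * c2 with hM
  have hMpos : 0 < M := by positivity
  have hbd : ∀ x ∈ K, ‖x.2.1‖ ≤ M ∧ ‖x.2.2‖ ≤ M := by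
    rintro ⟨z, p, q⟩ ⟨h1, -, h3, h4, h5⟩
    dsimp only at *
    have hR : 0 ≤ R := (norm_nonneg z).trans h1
    have hq : ‖q‖ ≤ R * c2 := by
      have e := congrArg norm h4
      rw [norm_mul, norm_pow, norm_mul, Complex.norm_real, Real.norm_of_nonneg hc2.le] at e
      have h6 : ‖q‖^2 ≤ (‖z‖ * c2)^2 := by
        rw [← e, sq]
        gcongr
      have h7 : ‖q‖ ≤ ‖z‖ * c2 := (sq_le_sq₀ (norm_nonneg _) (by positivity)).1 h6
      exact h7.trans (by gcongr)
    have hb : ‖z^2 + ν * c1^2 + c2^2‖ ≤ R^2 + ν * c1^2 + c2^2 := by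
      refine (norm_add_le _ _).trans ?_
      refine (add_le_add_left (norm_add_le _ _) _).trans ?_
      simp only [norm_pow, norm_mul, Complex.norm_real, Real.norm_eq_abs, sq_abs, abs_of_pos hν]
      gcongr
    have hp : ‖p‖ ≤ M := by
      have : p = (z^2 + ν * c1^2 + c2^2) - q := by rw [← h3]; ring
      rw [this]
      refine (norm_sub_le _ _).trans ?_
      rw [hM, abs_of_nonneg hR]
      linarith
    exact ⟨hp, h5.trans hp⟩
  have hKcomp : IsCompact K := by
    refine (((isCompact_closedBall (0:ℂ) R).prod ((isCompact_closedBall (0:ℂ) M).prod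
      (isCompact_closedBall (0:ℂ) M)))).of_isClosed_subset hKc ?_
    intro x hx
    refine ⟨by simpa using hx.1, by simpa using (hbd x hx).1, by simpa using (hbd x hx).2⟩
  obtain ⟨δ, hδ, hδK⟩ := hKcomp.exists_forall_le' (f := fun x => ‖x.2.1‖ - ‖x.2.2‖) (a := 0)
    (by fun_prop) (by
      rintro ⟨z, p, q⟩ ⟨h1, h2, h3, h4, h5⟩
      exact sub_pos.2 (lt_of_le_of_ne h5 (hgap z p q h2 h3 h4).symm))
  set A : ℝ := ν * c1^2 * c2^2 with hA
  have hApos : 0 < A := by positivity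
  have hlim := tendsto_pow_atTop_atTop_of_one_lt (r := 1 + δ / M) (by
    have : 0 < δ / M := by positivity
    linarith)
  obtain ⟨n0, hn0⟩ := Filter.eventually_atTop.1 (hlim.eventually_gt_atTop ((M + c2^2)^2 / A))
  refine ⟨n0 + 1, by omega, ?_⟩
  intro n hn z p q h1 h2 h3 h4 h5 heq
  have hxK : ((z, p, q) : ℂ × ℂ × ℂ) ∈ K := ⟨h1, h2, h3, h4, h5⟩
  have hd : δ ≤ ‖p‖ - ‖q‖ := hδK _ hxK
  have hqM : ‖q‖ ≤ M := (hbd _ hxK).2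
  have hbig := hn0 n (by omega)
  rw [div_lt_iff₀ hApos] at hbig
  have hprod : (p - c2^2) * (q - c2^2) = -(A : ℂ) := by
    rw [hA]; push_cast
    linear_combination h4 - c2^2 * h3
  have hE : p^n * (-(A:ℂ)) = q^n * (q - c2^2)^2 := by
    rw [← hprod]
    linear_combination (q - c2^2) * heq
  have hEn := congrArg norm hE
  simp only [norm_mul, norm_pow, norm_neg, Complex.norm_real, Real.norm_of_nonneg hApos.le] at hEn
  have hqc : ‖q - c2^2‖ ≤ M + c2^2 := by
    refine (norm_sub_le _ _).trans ?_
    simp only [norm_pow, Complex.norm_real, Real.norm_eq_abs, sq_abs]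
    gcongr
  have hqpos : 0 < ‖q‖ := by
    rcases (norm_nonneg q).lt_or_eq with h | h
    · exact h
    · exfalso
      rw [← h] at hEn hd
      rw [zero_pow (by omega), zero_mul] at hEn
      have : 0 < ‖p‖ := by linarith
      have : 0 < ‖p‖^n * A := by positivity
      linarith
  have hpge : ‖q‖ * (1 + δ / M) ≤ ‖p‖ := by
    have : ‖q‖ * (δ / M) ≤ M * (δ / M) := by gcongr
    have h8 : M * (δ / M) = δ := by field_simp
    linarith
  have hpow : (‖q‖ * (1 + δ / M))^n ≤ ‖p‖^n := by gcongr
  rw [mul_pow] at hpow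
  have hqn : 0 < ‖q‖^n := by positivity
  have c1' : ‖q‖^n * ((1 + δ / M)^n * A) ≤ ‖q‖^n * (M + c2^2)^2 := by
    calc ‖q‖^n * ((1 + δ / M)^n * A) = (‖q‖^n * (1 + δ / M)^n) * A := by ring
      _ ≤ ‖p‖^n * A := by gcongr
      _ = ‖q‖^n * ‖q - c2^2‖^2 := hEn
      _ ≤ _ := by gcongr
  have := le_of_mul_le_mul_left c1' hqn
  linarith

open scoped Classical in
/-- Φ is an eigenvalue cluster for the sequence (T^PS_N): for every open
set O containing Φ, the number of eigenvalues of T^PS_N (with multiplicity) lying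
outside O is o(N) as N → ∞. -/
theorem PhiSet_eigenvalue_cluster (ν Δt lam : ℝ)
    (hν : 0 < ν) (hΔt : 0 < Δt) (hlam : 0 < lam) :
    ∀ O : Set ℂ, IsOpen O → PhiSet ν Δt lam ⊆ O →
      Filter.Tendsto
        (fun N : ℕ =>
          (Multiset.card
              (Multiset.filter (fun z => z ∉ O)
                (((TPS ν Δt lam N).map (fun x => (x : ℂ))).charpoly.roots)) : ℝ) / N)
        Filter.atTop (nhds 0) := by
  intro O hO hPhi
  have hc1 := aux_C1_ne ν Δt lam hν hΔt hlam
  have hc2 := aux_C2_pos ν Δt lam hν hΔt hlam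
  obtain ⟨n0, hn0, hlarge⟩ := aux_large ν (C1 ν Δt lam) (C2 ν Δt lam) hν hc1 hc2
    (|C1 ν Δt lam| + ν * |C1 ν Δt lam| + |C2 ν Δt lam|) O hO (by
      intro z p q hz hs hp hn
      exact hz (hPhi (aux_mem ν _ _ hν hc1 hc2 z p q hs hp hn)))
  refine tendsto_const_nhds.congr' ?_
  filter_upwards [Filter.eventually_ge_atTop (n0 + 1)] with N hN
  have hempty : Multiset.filter (fun z => z ∉ O)
      (((TPS ν Δt lam N).map (fun x => (x : ℂ))).charpoly.roots) = 0 := by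
    rw [Multiset.filter_eq_nil]
    intro z hz hzO
    obtain ⟨f, hne, hf0, h1, h2, h3⟩ := aux_eig ν Δt lam N z hz
    have hb := aux_bound ν _ _ hν (N-1) z f hne hf0 h1 h2 h3
    obtain ⟨p, q, hs, hp, hpq⟩ := aux_pq (z^2 + ν * (C1 ν Δt lam : ℂ)^2 + (C2 ν Δt lam : ℂ)^2)
      ((z * (C2 ν Δt lam : ℂ))^2)
    exact hlarge (N-1) (by omega) z p q hb hzO hs hp hpq
      (aux_key ν _ _ hν hc1 hc2 (N-1) (by omega) z f hne hf0 h1 h2 h3 p q hs hp)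
  rw [hempty]
  simp
end
end

section
/- Let ν > 0, Δt > 0, λ > 0, σ := √(λ² + 1/ν), C₁ := −ν⁻¹·sinh(σΔt)/(σ·cosh(σΔt) + λ·sinh(σΔt)) and C₂ := σ/(σ·cosh(σΔt) + λ·sinh(σΔt)). Since C₁ ≠ 0 for these positive parameters, the complement ℂ \ Φ of the set Φ := {C₂·cos(θ) + ε·i·√(C₂²·sin²(θ) + ν·C₁²) : θ ∈ [−π, π], ε ∈ {−1, +1}} is a connected subset of ℂ; that is, Φ does not disconnect the complex plane. -/
noncomputable section

lemma ext_preconn (R : ℝ) (hR : 0 < R) : IsPreconnected {z : ℂ | R < ‖z‖} := by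
  have h : {z : ℂ | R < ‖z‖} = Complex.exp '' {z : ℂ | Real.log R < z.re} := by
    ext z
    simp only [Set.mem_ofPred_eq, Set.mem_image]
    constructor
    · intro hz
      have hz0 : z ≠ 0 := by
        rintro rfl
        simp at hz
        linarith
      refine ⟨Complex.log z, ?_, Complex.exp_log hz0⟩
      rw [Complex.log_re]
      exact Real.log_lt_log hR hz
    · rintro ⟨w, hw, rfl⟩
      rw [Complex.norm_exp]
      exact (Real.log_lt_iff_lt_exp hR).1 hw
  rw [h]
  exact (convex_halfSpace_re_gt _).isPreconnected.image _ Complex.continuous_exp.continuousOn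

lemma arcs_compl (c d : ℝ) (hc : 0 < c) (hd : 0 < d) :
    {z : ℂ | ∃ θ ∈ Set.Icc (-Real.pi) Real.pi, ∃ ε : ℝ, (ε = 1 ∨ ε = -1) ∧
      z = (c * Real.cos θ : ℝ) + (ε : ℂ) * Complex.I *
          (Real.sqrt (c ^ 2 * Real.sin θ ^ 2 + d) : ℝ)}ᶜ =
    ((Metric.ball (0 : ℂ) (Real.sqrt (c ^ 2 + d)) ∪ {z : ℂ | c < z.re}) ∪ {z : ℂ | z.re < -c}) ∪
      {z : ℂ | Real.sqrt (c ^ 2 + d) < ‖z‖} := by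
  have key : ∀ z : ℂ, ‖z‖ = Real.sqrt (c ^ 2 + d) ↔ z.re ^ 2 + z.im ^ 2 = c ^ 2 + d := by
    intro z
    have h1 : ‖z‖ ^ 2 = z.re ^ 2 + z.im ^ 2 := by
      rw [Complex.sq_norm, Complex.normSq_apply]; ring
    rw [← h1, eq_comm, Real.sqrt_eq_iff_mul_self_eq (by positivity) (norm_nonneg _), sq ‖z‖, eq_comm]
    
  rw [compl_eq_comm]
  ext z
  simp only [Set.mem_compl_iff, Set.mem_union, Metric.mem_ball, dist_zero_right, Set.mem_ofPred_eq,
    not_or, not_lt]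
  constructor
  · rintro ⟨⟨⟨h1, h2⟩, h3⟩, h4⟩
    have h := (key z).1 (le_antisymm h4 h1)
    have hcos : c * Real.cos (Real.arccos (z.re / c)) = z.re := by
      rw [Real.cos_arccos]
      · field_simp
      · rw [le_div_iff₀ hc]; linarith
      · rw [div_le_iff₀ hc]; linarith
    have hs : c ^ 2 * Real.sin (Real.arccos (z.re / c)) ^ 2 + d = z.im ^ 2 := by
      rw [Real.sin_sq, mul_sub, ← mul_pow, hcos]; linarith
    refine ⟨Real.arccos (z.re / c), ⟨?_, Real.arccos_le_pi _⟩, if 0 ≤ z.im then 1 else -1, ?_, ?_⟩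
    · linarith [Real.arccos_nonneg (z.re / c), Real.pi_pos]
    · split_ifs <;> simp
    · rw [hs, hcos, Real.sqrt_sq_eq_abs]
      split_ifs with h0
      · rw [abs_of_nonneg h0]; apply Complex.ext <;> simp
      · rw [abs_of_neg (not_le.1 h0)]; apply Complex.ext <;> simp
  · rintro ⟨θ, -, ε, hε, rfl⟩
    have hε2 : ε ^ 2 = 1 := by rcases hε with rfl | rfl <;> norm_num
    set z : ℂ := (c * Real.cos θ : ℝ) + (ε : ℂ) * Complex.I *
          (Real.sqrt (c ^ 2 * Real.sin θ ^ 2 + d) : ℝ) with hz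
    have hre : z.re = c * Real.cos θ := by
      rw [hz, Complex.add_re, Complex.ofReal_re, Complex.re_mul_ofReal]; simp
    have him : z.im = ε * Real.sqrt (c ^ 2 * Real.sin θ ^ 2 + d) := by
      rw [hz, Complex.add_im, Complex.ofReal_im, Complex.im_mul_ofReal]; simp
    have hn := (key z).2 (by
      rw [hre, him, mul_pow, mul_pow, hε2, Real.sq_sqrt (by positivity), Real.sin_sq]; ring)
    refine ⟨⟨⟨hn.ge, ?_⟩, ?_⟩, hn.le⟩
    · rw [hre]; nlinarith [Real.cos_le_one θ]
    · rw [hre]; nlinarith [Real.neg_one_le_cos θ]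

lemma arcs_conn (c d : ℝ) (hc : 0 < c) (hd : 0 < d) :
    IsConnected (((Metric.ball (0 : ℂ) (Real.sqrt (c ^ 2 + d)) ∪ {z : ℂ | c < z.re}) ∪
      {z : ℂ | z.re < -c}) ∪ {z : ℂ | Real.sqrt (c ^ 2 + d) < ‖z‖}) := by
  set R := Real.sqrt (c ^ 2 + d) with hR
  have hcR : c < R := Real.lt_sqrt_of_sq_lt (by linarith)
  have hR0 : 0 < R := hc.trans hcR
  refine ⟨⟨0, by simp [hR0]⟩, ?_⟩
  refine IsPreconnected.union ((R + 1 : ℝ) : ℂ) ?_ ?_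
    (IsPreconnected.union ((-((c + R) / 2) : ℝ) : ℂ) ?_ ?_
    (IsPreconnected.union (((c + R) / 2 : ℝ) : ℂ) ?_ ?_ Metric.isPreconnected_ball
      (convex_halfSpace_re_gt _).isPreconnected)
      (convex_halfSpace_re_lt _).isPreconnected) (ext_preconn R hR0)
  · left; right
    rw [Set.mem_ofPred_eq, Complex.ofReal_re]; linarith
  · rw [Set.mem_ofPred_eq, Complex.norm_real, Real.norm_of_nonneg (by linarith)]; linarith
  · left
    rw [mem_ball_zero_iff, Complex.norm_real, norm_neg, Real.norm_of_nonneg (by linarith)]; linarith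
  · rw [Set.mem_ofPred_eq, Complex.ofReal_re]; linarith
  · rw [mem_ball_zero_iff, Complex.norm_real, Real.norm_of_nonneg (by linarith)]; linarith
  · rw [Set.mem_ofPred_eq, Complex.ofReal_re]; linarith

/-- since C₁ ≠ 0 for positive parameters, the complement ℂ \ Φ is
connected: Φ does not disconnect the complex plane. -/
theorem PhiSet_compl_connected (ν Δt lam : ℝ)
    (hν : 0 < ν) (hΔt : 0 < Δt) (hlam : 0 < lam) :
    IsConnected ((PhiSet ν Δt lam)ᶜ) := by
  have hs : 0 < sig ν lam := Real.sqrt_pos.2 (by positivity)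
  have hsh : 0 < Real.sinh (sig ν lam * Δt) := Real.sinh_pos_iff.2 (by positivity)
  have hch := Real.cosh_pos (sig ν lam * Δt)
  have hc : 0 < C2 ν Δt lam := by unfold C2; positivity
  have hC1 : C1 ν Δt lam < 0 := by
    unfold C1
    exact div_neg_of_neg_of_pos (neg_neg_of_pos (by positivity)) (by positivity)
  have hd : 0 < ν * C1 ν Δt lam ^ 2 := mul_pos hν (sq_pos_of_neg hC1)
  unfold PhiSet
  rw [arcs_compl _ _ hc hd]
  exact arcs_conn _ _ hc hd
end
end

section
/- Let ν > 0, λ > 0, σ := √(λ² + 1/ν), and let a < b be real numbers with Δt := b − a. Set C₁ := −ν⁻¹·sinh(σΔt)/(σ·cosh(σΔt) + λ·sinh(σΔt)) and C₂ := σ/(σ·cosh(σΔt) + λ·sinh(σΔt)). Suppose z : ℝ → ℝ is twice differentiable and satisfies z''(t) = σ²·z(t) for all t ∈ ℝ. Then z'(a) + λ·z(a) = C₁·z(a) + C₂·(z'(b) + λ·z(b)) and z(b) = C₂·z(a) − ν·C₁·(z'(b) + λ·z(b)). -/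
noncomputable section

/-- if z'' = σ² z on ℝ and Δt = b − a, then the interface quantities
satisfy z'(a) + λ z(a) = C₁ z(a) + C₂ (z'(b) + λ z(b)) and
z(b) = C₂ z(a) − ν C₁ (z'(b) + λ z(b)). -/
theorem interface_recurrence (ν lam : ℝ) (hν : 0 < ν) (hlam : 0 < lam)
    (a b : ℝ) (hab : a < b) (Δt : ℝ) (hΔt : Δt = b - a)
    (z : ℝ → ℝ) (hz : Differentiable ℝ z) (hz' : Differentiable ℝ (deriv z))
    (hode : ∀ t : ℝ, deriv (deriv z) t = sig ν lam ^ 2 * z t) :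
    deriv z a + lam * z a =
        C1 ν Δt lam * z a + C2 ν Δt lam * (deriv z b + lam * z b) ∧
    z b = C2 ν Δt lam * z a - ν * C1 ν Δt lam * (deriv z b + lam * z b) := by
  have hpos : 0 < lam ^ 2 + 1 / ν := by positivity
  have hσ : 0 < sig ν lam := Real.sqrt_pos.mpr hpos
  have hσ2 : sig ν lam ^ 2 = lam ^ 2 + 1 / ν := Real.sq_sqrt hpos.le
  unfold C1 C2
  generalize sig ν lam = σ at *
  have hz1 : ∀ t, HasDerivAt z (deriv z t) t := fun t => (hz t).hasDerivAt
  have hz2 : ∀ t, HasDerivAt (deriv z) (σ ^ 2 * z t) t := fun t => by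
    rw [← hode t]; exact (hz' t).hasDerivAt
  have hl : ∀ t : ℝ, HasDerivAt (fun t => σ * (b - t)) (-σ) t := fun t => by
    simpa using ((hasDerivAt_id t).const_sub b).const_mul σ
  have e1 : ∀ t, HasDerivAt (fun t => σ * (z t * Real.cosh (σ * (b - t)))
      + deriv z t * Real.sinh (σ * (b - t))) 0 t := fun t => by
    have h := (((hz1 t).mul (hl t).cosh).const_mul σ).add ((hz2 t).mul (hl t).sinh)
    exact h.congr_deriv (by ring)
  have e2 : ∀ t, HasDerivAt (fun t => σ * (z t * Real.sinh (σ * (b - t)))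
      + deriv z t * Real.cosh (σ * (b - t))) 0 t := fun t => by
    have h := (((hz1 t).mul (hl t).sinh).const_mul σ).add ((hz2 t).mul (hl t).cosh)
    exact h.congr_deriv (by ring)
  have k1 := is_const_of_deriv_eq_zero (fun t => (e1 t).differentiableAt)
    (fun t => (e1 t).deriv) a b
  have k2 := is_const_of_deriv_eq_zero (fun t => (e2 t).differentiableAt)
    (fun t => (e2 t).deriv) a b
  rw [← hΔt] at k1 k2
  simp only [sub_self, mul_zero, Real.cosh_zero, Real.sinh_zero, mul_one, add_zero,
    zero_add] at k1 k2
  have hs : 0 < Real.sinh (σ * Δt) := by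
    rw [Real.sinh_pos_iff, hΔt]
    exact mul_pos hσ (sub_pos.mpr hab)
  have hc := Real.cosh_pos (σ * Δt)
  have hcs := Real.cosh_sq (σ * Δt)
  generalize Real.sinh (σ * Δt) = s at *
  generalize Real.cosh (σ * Δt) = c at *
  have hD : σ * c + lam * s ≠ 0 := by positivity
  have hi : ν⁻¹ = σ ^ 2 - lam ^ 2 := by rw [hσ2]; ring
  have hν2 : ν * ν⁻¹ = 1 := mul_inv_cancel₀ hν.ne'
  constructor
  · rw [hi, div_mul_eq_mul_div, div_mul_eq_mul_div, ← add_div, eq_div_iff hD, ← k2]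
    linear_combination lam * k1
  · rw [mul_div_assoc', mul_neg, ← mul_assoc, hν2, one_mul, div_mul_eq_mul_div,
      div_mul_eq_mul_div, ← sub_div, eq_div_iff hD, ← k2]
    linear_combination (-c) * k1 + σ * z a * hcs
end
end

section
/- Let ν > 0, Δt > 0, λ > 0, σ := √(λ² + 1/ν), C₁ := −ν⁻¹·sinh(σΔt)/(σ·cosh(σΔt) + λ·sinh(σΔt)) and C₂ := σ/(σ·cosh(σΔt) + λ·sinh(σΔt)). Let D be the 2(N−1)×2(N−1) block diagonal matrix whose N−1 diagonal 2×2 blocks all equal diag(1, √ν). Then for every integer N ≥ 3, the maximum over rows i of the Euclidean norm of the i-th row of D⁻¹·T^PS_N·D equals √(ν·C₁² + C₂²); that is, max_i (Σ_j ((D⁻¹·T^PS_N·D)_{ij})²)^{1/2} = √(ν·C₁² + C₂²). -/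
noncomputable section

/-- The block diagonal scaling matrix D with 2×2 diagonal blocks diag(1, √ν). -/
def Dmat (ν : ℝ) (N : ℕ) : Matrix (Fin (2 * (N - 1))) (Fin (2 * (N - 1))) ℝ :=
  Matrix.diagonal (fun i => if (i : ℕ) % 2 = 0 then 1 else Real.sqrt ν)

theorem Dmat_inv_aux (ν : ℝ) (hν : 0 < ν) (N : ℕ) :
    (Dmat ν N)⁻¹ = Matrix.diagonal (fun i : Fin (2 * (N - 1)) =>
      if (i : ℕ) % 2 = 0 then (1 : ℝ) else (Real.sqrt ν)⁻¹) := by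
  have hs : Real.sqrt ν ≠ 0 := (Real.sqrt_pos.2 hν).ne'
  apply Matrix.inv_eq_left_inv
  rw [Dmat, Matrix.diagonal_mul_diagonal, ← Matrix.diagonal_one]
  congr 1
  funext i
  split_ifs <;> simp [hs]

theorem sum_ite_aux (n p : ℕ) (a : ℝ) :
    (∑ j : Fin n, if (j : ℕ) = p then a else 0) = if p < n then a else 0 := by
  split_ifs with h
  · rw [Finset.sum_eq_single (⟨p, h⟩ : Fin n)]
    · simp
    · intro b _ hb
      rw [if_neg]
      intro hh
      exact hb (Fin.ext hh)
    · simp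
  · apply Finset.sum_eq_zero
    intro j _
    rw [if_neg]
    have := j.2
    omega

/-- Position of the diagonal-block entry in row `i`. -/
def posP (i : ℕ) : ℕ := if i % 2 = 0 then i + 1 else i - 1

/-- Position of the off-diagonal-block entry in row `i` (equal to `n` if there is none). -/
def posQ (n i : ℕ) : ℕ := if i % 2 = 0 then i + 2 else if 2 ≤ i then i - 2 else n

theorem entry_aux (ν Δt lam : ℝ) (hν : 0 < ν) (N : ℕ) (i j : Fin (2 * (N - 1))) :
    (((Dmat ν N)⁻¹ * TPS ν Δt lam N * Dmat ν N) i j) ^ 2 =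
      (if (j : ℕ) = posP i then ν * C1 ν Δt lam ^ 2 else 0) +
      (if (j : ℕ) = posQ (2 * (N - 1)) i then C2 ν Δt lam ^ 2 else 0) := by
  have hs : Real.sqrt ν ≠ 0 := (Real.sqrt_pos.2 hν).ne'
  have hsq : Real.sqrt ν ^ 2 = ν := Real.sq_sqrt hν.le
  have h1 : (C1 ν Δt lam * Real.sqrt ν) ^ 2 = ν * C1 ν Δt lam ^ 2 := by
    rw [mul_pow, hsq]; ring
  have h2 : ((Real.sqrt ν)⁻¹ * (-ν * C1 ν Δt lam)) ^ 2 = ν * C1 ν Δt lam ^ 2 := by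
    rw [mul_pow, inv_pow, hsq]; field_simp
  have h3 : ((Real.sqrt ν)⁻¹ * C2 ν Δt lam * Real.sqrt ν) ^ 2 = C2 ν Δt lam ^ 2 := by
    field_simp
  rw [Dmat_inv_aux ν hν, Dmat, Matrix.mul_diagonal, Matrix.diagonal_mul, TPS]
  have hi := i.2
  have hj := j.2
  generalize (i : ℕ) = a at *
  generalize (j : ℕ) = b at *
  unfold posP posQ
  rcases Nat.mod_two_eq_zero_or_one a with ha | ha <;>
  rcases Nat.mod_two_eq_zero_or_one b with hb | hb <;>
  simp only [ha, hb, if_true, if_false, one_ne_zero, zero_ne_one, and_true, and_false,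
    true_and, false_and, and_self] <;>
  split_ifs <;> first | omega | (simp [h1]; done) | (simp only [mul_one, add_zero]; exact h2) | (simp only [zero_add]; exact h3)

/-- for N ≥ 3, the maximum over rows of the Euclidean norm of the rows of
D⁻¹ T^PS_N D equals √(ν C₁² + C₂²). -/
theorem scaled_matrix_row_norm (ν Δt lam : ℝ)
    (hν : 0 < ν) (hΔt : 0 < Δt) (hlam : 0 < lam) :
    ∀ N : ℕ, 3 ≤ N →
      (⨆ i : Fin (2 * (N - 1)),
        Real.sqrt (∑ j : Fin (2 * (N - 1)),
          (((Dmat ν N)⁻¹ * TPS ν Δt lam N * Dmat ν N) i j) ^ 2)) =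
      Real.sqrt (ν * C1 ν Δt lam ^ 2 + C2 ν Δt lam ^ 2) := by
  intro N hN
  have hrow : ∀ i : Fin (2 * (N - 1)), (∑ j : Fin (2 * (N - 1)),
      (((Dmat ν N)⁻¹ * TPS ν Δt lam N * Dmat ν N) i j) ^ 2) =
      (if posP i < 2 * (N - 1) then ν * C1 ν Δt lam ^ 2 else 0) +
      (if posQ (2 * (N - 1)) i < 2 * (N - 1) then C2 ν Δt lam ^ 2 else 0) := by
    intro i
    simp only [entry_aux ν Δt lam hν, Finset.sum_add_distrib, sum_ite_aux]
  have hle : ∀ i : Fin (2 * (N - 1)), Real.sqrt (∑ j : Fin (2 * (N - 1)),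
      (((Dmat ν N)⁻¹ * TPS ν Δt lam N * Dmat ν N) i j) ^ 2) ≤
      Real.sqrt (ν * C1 ν Δt lam ^ 2 + C2 ν Δt lam ^ 2) := by
    intro i
    rw [hrow]
    apply Real.sqrt_le_sqrt
    have e1 : 0 ≤ ν * C1 ν Δt lam ^ 2 := by positivity
    have e2 : 0 ≤ C2 ν Δt lam ^ 2 := by positivity
    split_ifs <;> linarith
  have h0 : 0 < 2 * (N - 1) := by omega
  haveI : Nonempty (Fin (2 * (N - 1))) := ⟨⟨0, h0⟩⟩
  apply le_antisymm
  · exact ciSup_le hle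
  · refine le_trans (le_of_eq ?_) (le_ciSup (f := fun i : Fin (2 * (N - 1)) =>
      Real.sqrt (∑ j : Fin (2 * (N - 1)),
        (((Dmat ν N)⁻¹ * TPS ν Δt lam N * Dmat ν N) i j) ^ 2)) ?_ (⟨0, h0⟩ : Fin (2 * (N - 1))))
    · simp only [hrow]
      rw [if_pos, if_pos]
      · simp only [posQ, Nat.zero_mod, if_true]; omega
      · simp only [posP, Nat.zero_mod, if_true]; omega
    · exact ⟨_, by rintro _ ⟨i, rfl⟩; exact hle i⟩
end
end
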